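/- Every accumulation point of the set Φ̂ of normalized roots lies in Q ∩ V₁; that is, E(Φ) ⊆ Q̂. In particular, if (ρ_n)_{n∈ℕ} is an injective sequence in Φ⁺ such that (ρ̂_n) converges to a limit ℓ, then B(ℓ,ℓ) = 0 and ℓ ∈ V₁. -/

import Mathlib

open Filter Topology

noncomputable section

variable {ι V : Type*} [Fintype ι] [NormedAddCommGroup V] [NormedSpace ℝ V]

/-- The set of simple `B`-reflections: the linear automorphisms of `V` given by the
`B`-reflection formula `u ↦ u - 2 (B α u / B α α) • α` associated to a simple root `α ∈ Δ`. -/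
def simpleReflections (B : LinearMap.BilinForm ℝ V) (Δ : Module.Basis ι ℝ V) :
    Set (V ≃ₗ[ℝ] V) :=
  { e | ∃ i : ι, ∀ u : V, e u = u - (2 * B (Δ i) u / B (Δ i) (Δ i)) • Δ i }

/-- The geometric Coxeter group `W`: the subgroup of linear automorphisms of `V`
generated by the simple `B`-reflections. -/
def cox (B : LinearMap.BilinForm ℝ V) (Δ : Module.Basis ι ℝ V) : Subgroup (V ≃ₗ[ℝ] V) :=
  Subgroup.closure (simpleReflections B Δ)

/-- The root system `Φ = W ⬝ Δ`. -/
def Phi (B : LinearMap.BilinForm ℝ V) (Δ : Module.Basis ι ℝ V) : Set V :=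
  { ρ | ∃ w ∈ cox B Δ, ∃ i : ι, w (Δ i) = ρ }

/-- The positive roots `Φ⁺ = Φ ∩ cone(Δ)`. -/
def posPhi (B : LinearMap.BilinForm ℝ V) (Δ : Module.Basis ι ℝ V) : Set V :=
  { ρ ∈ Phi B Δ | ∀ i : ι, 0 ≤ Δ.repr ρ i }

/-- `|v|₁`: the sum of the coordinates of `v` in the basis `Δ`. -/
def l1 (Δ : Module.Basis ι ℝ V) (v : V) : ℝ := ∑ i : ι, Δ.repr v i

/-- The normalization map `v ↦ v̂ = v / |v|₁`. -/
def nrm (Δ : Module.Basis ι ℝ V) (v : V) : V := (l1 Δ v)⁻¹ • v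

/-- The set `Φ̂` of normalized roots. -/
def nPhi (B : LinearMap.BilinForm ℝ V) (Δ : Module.Basis ι ℝ V) : Set V :=
  nrm Δ '' posPhi B Δ

/-- `E(Φ)`: the set of accumulation points of the set of normalized roots. -/
def Eset (B : LinearMap.BilinForm ℝ V) (Δ : Module.Basis ι ℝ V) : Set V :=
  { x | AccPt x (𝓟 (nPhi B Δ)) }

/-- The isotropic cone `Q` of `B`. -/
def isoQ (B : LinearMap.BilinForm ℝ V) : Set V := { v | B v v = 0 }

/-!
The Coxeter group acts discretely: the reflections in two roots that are close to each other
compose to an element close to the identity, which keeps every simple root at positive height, and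
by the positive root criterion only the identity does so. Hence two roots that are close enough to
a given point coincide, and only finitely many positive roots have bounded height `|ρ|₁`. Since
roots have norm one, `B(ρ̂, ρ̂) = |ρ|₁⁻²` tends to `0` along every injective sequence of positive
roots.
-/

open Polynomial.Chebyshev

/-! ### Chebyshev polynomials of the second kind -/

lemma chebyshev_U_nonneg_of_one_le {x : ℝ} (hx : 1 ≤ x) (n : ℕ) :
    0 ≤ (U ℝ (n - 1)).eval x ∧ (U ℝ (n - 1)).eval x ≤ (U ℝ n).eval x := by
  induction n with
  | zero => simp
  | succ n ih =>
    obtain ⟨hnonneg, hle⟩ := ih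
    have hrec : (U ℝ (n + 1)).eval x = 2 * x * (U ℝ n).eval x - (U ℝ (n - 1)).eval x := by
      simp [U_add_one]
    simp only [Nat.cast_add, Nat.cast_one, add_sub_cancel_right]
    exact ⟨hnonneg.trans hle, by nlinarith⟩

lemma sin_pi_div_pos {m : ℕ} (hm : 2 ≤ m) : 0 < Real.sin (Real.pi / m) :=
  Real.sin_pos_of_pos_of_lt_pi (by positivity) (div_lt_self Real.pi_pos (by exact_mod_cast hm))

lemma chebyshev_U_eval_cos_pi_div {m : ℕ} (hm : 2 ≤ m) (n : ℤ) :
    (U ℝ n).eval (Real.cos (Real.pi / m)) =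
      Real.sin ((n + 1) * (Real.pi / m)) / Real.sin (Real.pi / m) := by
  rw [eq_div_iff (sin_pi_div_pos hm).ne', U_real_cos]

lemma chebyshev_U_cos_pi_div_nonneg {m : ℕ} (hm : 2 ≤ m) {n : ℕ} (hn : n ≤ m) :
    0 ≤ (U ℝ (n - 1)).eval (Real.cos (Real.pi / m)) := by
  have sin_nonneg (k : ℕ) (hk : k ≤ m) : 0 ≤ Real.sin (k * (Real.pi / m)) := by
    refine Real.sin_nonneg_of_nonneg_of_le_pi (by positivity) ?_
    rw [mul_div_left_comm]
    exact mul_le_of_le_one_right Real.pi_pos.le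
      ((div_le_one (by positivity)).2 (by exact_mod_cast hk))
  rw [chebyshev_U_eval_cos_pi_div hm]
  push_cast
  rw [sub_add_cancel]
  exact div_nonneg (sin_nonneg n hn) (sin_pi_div_pos hm).le

lemma chebyshev_U_cos_pi_div_eq_zero {m : ℕ} (hm : 2 ≤ m) :
    (U ℝ (m - 1)).eval (Real.cos (Real.pi / m)) = 0 := by
  rw [chebyshev_U_eval_cos_pi_div hm]
  push_cast
  rw [sub_add_cancel, mul_div_cancel₀ _ (by positivity), Real.sin_pi, zero_div]

lemma chebyshev_U_cos_pi_div_eq_one {m : ℕ} (hm : 2 ≤ m) :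
    (U ℝ (m - 2)).eval (Real.cos (Real.pi / m)) = 1 := by
  rw [chebyshev_U_eval_cos_pi_div hm, div_eq_one_iff_eq (sin_pi_div_pos hm).ne', ← Real.sin_pi_sub]
  congr 1
  push_cast
  field_simp
  ring

/-! ### Orthogonal group and reflections of a symmetric bilinear form -/

section Reflection

variable {E : Type*} [AddCommGroup E] [Module ℝ E] {B : LinearMap.BilinForm ℝ E}

/-- The orthogonal group `O_B(E)` of a bilinear form `B`. -/
def orthogonalGroup (B : LinearMap.BilinForm ℝ E) : Subgroup (E ≃ₗ[ℝ] E) where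
  carrier := {g | ∀ u v, B (g u) (g v) = B u v}
  one_mem' _ _ := rfl
  mul_mem' hg hk u v := (hg _ _).trans (hk u v)
  inv_mem' {g} hg u v := by
    simpa using (hg (g⁻¹ u) (g⁻¹ v)).symm

/-- The `B`-reflection in a vector `v` normalized by `B v v = 1`. -/
def unitReflection {v : E} (hv : B v v = 1) : E ≃ₗ[ℝ] E :=
  Module.reflection (x := v) (f := (2 : ℝ) • B v) (by simp [hv])

lemma unitReflection_apply {v : E} (hv : B v v = 1) (u : E) :
    unitReflection hv u = u - (2 * B v u) • v := by
  simp [unitReflection, Module.reflection_apply]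

lemma unitReflection_apply_self {v : E} (hv : B v v = 1) : unitReflection hv v = -v :=
  Module.reflection_apply_self _

lemma unitReflection_mul_self {v : E} (hv : B v v = 1) :
    unitReflection hv * unitReflection hv = 1 :=
  LinearEquiv.ext (Module.involutive_reflection _)

lemma unitReflection_mem_orthogonalGroup (hB : B.IsSymm) {v : E} (hv : B v v = 1) :
    unitReflection hv ∈ orthogonalGroup B := by
  intro u w
  simp only [unitReflection_apply, map_sub, map_smul, LinearMap.sub_apply, LinearMap.smul_apply,
    smul_eq_mul, hv, hB.eq u v]
  ring

lemma mul_unitReflection {g : E ≃ₗ[ℝ] E} (hg : g ∈ orthogonalGroup B) {v w : E}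
    (hv : B v v = 1) (hw : B w w = 1) (hgv : g v = w) :
    g * unitReflection hv = unitReflection hw * g := by
  ext u
  simp only [LinearEquiv.mul_apply, unitReflection_apply, map_sub, map_smul, ← hgv, hg v u]

lemma eq_or_eq_neg_of_unitReflection_eq {v w : E} {hv : B v v = 1} {hw : B w w = 1}
    (h : unitReflection hv = unitReflection hw) : v = w ∨ v = -w := by
  have hvw : v = B w v • w := by
    have := unitReflection_apply hw v
    rw [← h, unitReflection_apply_self] at this
    linear_combination (norm := module) (-(1 / 2 : ℝ)) • this
  have hsq : B w v * B w v = 1 := by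
    rw [hvw] at hv
    simpa [hw] using hv
  rcases mul_self_eq_one_iff.1 hsq with h1 | h1
  · exact .inl (by rw [hvw, h1, one_smul])
  · exact .inr (by rw [hvw, h1, neg_one_smul])

lemma prod_map_alternatingWord_inv_mul {I G : Type*} [Group G] {f : I → G} {i j : I}
    (hi : f i * f i = 1) (hj : f j * f j = 1) (n : ℕ) :
    ((CoxeterSystem.alternatingWord i j n).map f).prod⁻¹ *
      ((CoxeterSystem.alternatingWord j i n).map f).prod = (f j * f i) ^ n := by
  induction n generalizing i j with
  | zero => simp [CoxeterSystem.alternatingWord]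
  | succ n ih =>
    have hsemi : SemiconjBy (f j) (f i * f j) (f j * f i) := (mul_assoc _ _ _).symm
    rw [CoxeterSystem.alternatingWord_succ, CoxeterSystem.alternatingWord_succ]
    simp only [List.concat_eq_append, List.map_append, List.map_singleton, List.prod_append,
      List.prod_singleton, mul_inv_rev, inv_eq_of_mul_eq_one_right hj]
    calc f j * (List.map f (CoxeterSystem.alternatingWord j i n)).prod⁻¹ *
          ((List.map f (CoxeterSystem.alternatingWord i j n)).prod * f i)
        = f j * (f i * f j) ^ n * f i := by rw [← ih hj hi]; group
      _ = (f j * f i) ^ (n + 1) := by rw [(hsemi.pow_right n).eq, mul_assoc, pow_succ]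

lemma prod_map_unitReflection_alternatingWord_apply (hB : B.IsSymm) {I : Type*} {e : I → E}
    (he : ∀ i, B (e i) (e i) = 1) (i j : I) (n : ℕ) :
    ((CoxeterSystem.alternatingWord i j n).map fun k ↦ unitReflection (he k)).prod (e i) =
      (U ℝ n).eval (-B (e i) (e j)) • e (if Even n then i else j) +
        (U ℝ (n - 1)).eval (-B (e i) (e j)) • e (if Even n then j else i) := by
  induction n with
  | zero => simp [CoxeterSystem.alternatingWord]
  | succ n ih =>
    have hrec : (U ℝ (n + 1)).eval (-B (e i) (e j)) =
        2 * -B (e i) (e j) * (U ℝ n).eval (-B (e i) (e j)) -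
          (U ℝ (n - 1)).eval (-B (e i) (e j)) := by
      simp [U_add_one]
    rw [CoxeterSystem.alternatingWord_succ', List.map_cons, List.prod_cons, LinearEquiv.mul_apply,
      ih]
    push_cast
    rw [add_sub_cancel_right, hrec]
    by_cases hn : Even n
    · simp only [hn, Nat.even_add_one, not_true_eq_false, if_true, if_false, map_add, map_smul,
        unitReflection_apply, he, hB.eq (e j) (e i)]
      module
    · simp only [hn, Nat.even_add_one, not_false_eq_true, if_true, if_false, map_add, map_smul,
        unitReflection_apply, he]
      module

lemma prod_map_unitReflection_alternatingWord_comm (hB : B.IsSymm) {I : Type*} {e : I → E}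
    (he : ∀ i, B (e i) (e i) = 1) {i j : I} {m : ℕ} (hm : 2 ≤ m)
    (hij : B (e i) (e j) = -Real.cos (Real.pi / m)) :
    ((CoxeterSystem.alternatingWord i j m).map fun k ↦ unitReflection (he k)).prod =
      ((CoxeterSystem.alternatingWord j i m).map fun k ↦ unitReflection (he k)).prod := by
  obtain ⟨n, rfl⟩ : ∃ n, m = n + 1 := ⟨m - 1, by lia⟩
  set P := ((CoxeterSystem.alternatingWord i j n).map fun k ↦ unitReflection (he k)).prod with hP
  have hP_mem : P ∈ orthogonalGroup B := by
    refine Subgroup.list_prod_mem _ fun g hg ↦ ?_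
    obtain ⟨k, -, rfl⟩ := List.mem_map.1 hg
    exact unitReflection_mem_orthogonalGroup hB (he k)
  have hP_apply : P (e i) = e (if Even n then j else i) := by
    have hzero := chebyshev_U_cos_pi_div_eq_zero hm
    have hone := chebyshev_U_cos_pi_div_eq_one hm
    rw [show ((n + 1 : ℕ) - 1 : ℤ) = n by push_cast; ring] at hzero
    rw [show ((n + 1 : ℕ) - 2 : ℤ) = n - 1 by push_cast; ring] at hone
    rw [hP, prod_map_unitReflection_alternatingWord_apply hB he, hij, neg_neg, hzero, hone,
      zero_smul, one_smul, zero_add]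
  rw [CoxeterSystem.alternatingWord_succ', CoxeterSystem.alternatingWord_succ, List.map_cons,
    List.prod_cons, List.concat_eq_append, List.map_append, List.prod_append, List.map_singleton,
    List.prod_singleton, ← hP]
  exact (mul_unitReflection hP_mem (he i) (he _) hP_apply).symm

lemma unitReflection_mul_pow_eq_one (hB : B.IsSymm) {I : Type*} {e : I → E}
    (he : ∀ i, B (e i) (e i) = 1) {i j : I} {m : ℕ} (hm : 2 ≤ m)
    (hij : B (e i) (e j) = -Real.cos (Real.pi / m)) :
    (unitReflection (he j) * unitReflection (he i)) ^ m = 1 := by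
  rw [← prod_map_alternatingWord_inv_mul (f := fun k ↦ unitReflection (he k))
      (unitReflection_mul_self _) (unitReflection_mul_self _),
    prod_map_unitReflection_alternatingWord_comm hB he hm hij, inv_mul_cancel]

section Topology

variable [TopologicalSpace E] [IsTopologicalAddGroup E] [ContinuousSMul ℝ E] [T2Space E]
  [FiniteDimensional ℝ E]

lemma continuous_bilinForm (B : LinearMap.BilinForm ℝ E) :
    Continuous fun p : E × E ↦ B p.1 p.2 :=
  have : IsModuleTopology ℝ E := isModuleTopologyOfFiniteDimensional
  IsModuleTopology.continuous_bilinear_of_finite_left B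

lemma continuous_bilinForm_self (B : LinearMap.BilinForm ℝ E) : Continuous fun v : E ↦ B v v :=
  (continuous_bilinForm B).comp (continuous_id.prodMk continuous_id)

lemma eventually_pos_unitReflection_unitReflection {f : Module.Dual ℝ E} {x u : E}
    (hx : B x x = 1) (hu : 0 < f u) :
    ∀ᶠ p : E × E in 𝓝 (x, x), ∀ (h₁ : B p.1 p.1 = 1) (h₂ : B p.2 p.2 = 1),
      0 < f (unitReflection h₁ (unitReflection h₂ u)) := by
  let s (v u : E) : E := u - (2 * B v u) • v
  have hs : Continuous (Function.uncurry s) := by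
    have := continuous_bilinForm B
    exact continuous_snd.sub ((this.const_mul 2).smul continuous_fst)
  have hcont : Continuous fun p : E × E ↦ f (s p.1 (s p.2 u)) :=
    f.continuous_of_finiteDimensional.comp <|
      hs.comp (continuous_fst.prodMk (hs.comp (continuous_snd.prodMk continuous_const)))
  have hpos : 0 < f (s x (s x u)) := by
    simpa only [s, ← unitReflection_apply hx, ← LinearEquiv.mul_apply, unitReflection_mul_self]
  filter_upwards [hcont.continuousAt.eventually_const_lt hpos] with p hp h₁ h₂
  rwa [unitReflection_apply, unitReflection_apply]

end Topology

end Reflection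

/-! ### Dihedral factorization in a Coxeter group -/

section CoxeterGroup

variable {I : Type*} {M : CoxeterMatrix I} {W : Type*} [Group W] (cs : CoxeterSystem M W)

lemma exists_eq_mul_wordProd_alternatingWord {w : W} (i : I) {j : I}
    (hj : cs.IsRightDescent w j) :
    ∃ (v : W) (n : ℕ), 0 < n ∧ w = v * cs.wordProd (CoxeterSystem.alternatingWord i j n) ∧
      cs.length w = cs.length v + n ∧ ¬cs.IsRightDescent v i ∧ ¬cs.IsRightDescent v j := by
  induction hw : cs.length w generalizing w i j with
  | zero => exact absurd hj (by simp [CoxeterSystem.IsRightDescent, hw])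
  | succ l ih =>
    have hlen : cs.length (w * cs.simple j) = l := by
      have := cs.isRightDescent_iff.1 hj
      lia
    have hdesc : ¬cs.IsRightDescent (w * cs.simple j) j :=
      cs.isRightDescent_iff_not_isRightDescent_mul.1 hj
    by_cases hi : cs.IsRightDescent (w * cs.simple j) i
    · obtain ⟨v, n, -, hv, hlv, hvj, hvi⟩ := ih j hi hlen
      refine ⟨v, n + 1, n.succ_pos, ?_, by lia, hvi, hvj⟩
      rw [CoxeterSystem.alternatingWord_succ, cs.wordProd_concat, ← mul_assoc, ← hv,
        cs.simple_mul_simple_cancel_right]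
    · exact ⟨w * cs.simple j, 1, one_pos, by simp [CoxeterSystem.alternatingWord], by lia, hi,
        hdesc⟩

lemma isReduced_alternatingWord_succ {v : W} {i j : I} {n : ℕ}
    (hlen : cs.length (v * cs.wordProd (CoxeterSystem.alternatingWord i j n)) = cs.length v + n)
    (hi : ¬cs.IsRightDescent (v * cs.wordProd (CoxeterSystem.alternatingWord i j n)) i) :
    cs.IsReduced (CoxeterSystem.alternatingWord j i (n + 1)) := by
  have hle := cs.length_wordProd_le (CoxeterSystem.alternatingWord j i (n + 1))
  have hmul := cs.length_mul_le v (cs.wordProd (CoxeterSystem.alternatingWord j i (n + 1)))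
  rw [cs.not_isRightDescent_iff, mul_assoc, ← cs.wordProd_concat,
    ← CoxeterSystem.alternatingWord_succ] at hi
  rw [CoxeterSystem.length_alternatingWord] at hle
  rw [CoxeterSystem.IsReduced, CoxeterSystem.length_alternatingWord]
  lia

lemma le_of_isReduced_alternatingWord {i j : I} {n : ℕ}
    (h : cs.IsReduced (CoxeterSystem.alternatingWord i j n)) : M i j = 0 ∨ n ≤ M i j := by
  by_contra! hM
  exact cs.not_isReduced_alternatingWord i j hM.1 hM.2 h

end CoxeterGroup

/-! ### Geometric realizations of a Coxeter matrix -/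

/-- A family `Δ` of vectors is a geometric realization of the Coxeter matrix `M` with respect to
the symmetric bilinear form `B` if its Gram matrix has entries `-cos (π / M i j)`, relaxed to
entries at most `-1` where `M i j = 0`, Mathlib's encoding of `M i j = ∞`. -/
structure IsGeometricRealization {I E : Type*} [AddCommGroup E] [Module ℝ E]
    (M : CoxeterMatrix I) (B : LinearMap.BilinForm ℝ E) (Δ : I → E) : Prop where
  isSymm : B.IsSymm
  apply_eq_neg_cos : ∀ i j, M i j ≠ 0 → B (Δ i) (Δ j) = -Real.cos (Real.pi / M i j)
  apply_le_neg_one : ∀ i j, M i j = 0 → B (Δ i) (Δ j) ≤ -1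

section Existence

variable {I E : Type*} [AddCommGroup E] [Module ℝ E]

lemma exists_isGeometricRealization {B : LinearMap.BilinForm ℝ E} {Δ : I → E} (hB : B.IsSymm)
    (hself : ∀ i, B (Δ i) (Δ i) = 1)
    (hne : ∀ i j, i ≠ j → B (Δ i) (Δ j) ≤ -1 ∨
      ∃ k : ℕ, 2 ≤ k ∧ B (Δ i) (Δ j) = -Real.cos (Real.pi / k)) :
    ∃ M : CoxeterMatrix I, IsGeometricRealization M B Δ := by
  classical
  have exists_order (x : ℝ) : ∃ m : ℕ, m ≠ 1 ∧
      ((x ≤ -1 ∨ ∃ k : ℕ, 2 ≤ k ∧ x = -Real.cos (Real.pi / k)) →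
        (m ≠ 0 → x = -Real.cos (Real.pi / m)) ∧ (m = 0 → x ≤ -1)) := by
    by_cases hx : ∃ k : ℕ, 2 ≤ k ∧ x = -Real.cos (Real.pi / k)
    · obtain ⟨k, hk, rfl⟩ := hx
      exact ⟨k, by lia, fun _ ↦ ⟨fun _ ↦ rfl, by lia⟩⟩
    · exact ⟨0, by simp, fun h ↦ ⟨by simp, fun _ ↦ h.resolve_right hx⟩⟩
  choose order order_ne_one order_spec using exists_order
  let M : CoxeterMatrix I :=
    { M := .of fun i j ↦ if i = j then 1 else order (B (Δ i) (Δ j))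
      isSymm := .ext fun i j ↦ by simp [hB.eq (Δ i) (Δ j), eq_comm]
      diagonal := by simp
      off_diagonal := fun i j hij ↦ by simp [hij, order_ne_one] }
  have M_of_ne {i j : I} (hij : i ≠ j) : M i j = order (B (Δ i) (Δ j)) := if_neg hij
  refine ⟨M, hB, fun i j ↦ ?_, fun i j ↦ ?_⟩ <;> rcases eq_or_ne i j with rfl | hij
  · simp [hself]
  · exact M_of_ne hij ▸ (order_spec _ (hne i j hij)).1
  · simp
  · exact M_of_ne hij ▸ (order_spec _ (hne i j hij)).2

end Existence

namespace IsGeometricRealization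

variable {I E : Type*} [AddCommGroup E] [Module ℝ E] {M : CoxeterMatrix I}
  {B : LinearMap.BilinForm ℝ E} {Δ : I → E} (h : IsGeometricRealization M B Δ)

include h

lemma apply_self (i : I) : B (Δ i) (Δ i) = 1 := by
  simp [h.apply_eq_neg_cos i i]

lemma chebyshev_U_nonneg {i j : I} (hij : i ≠ j) {n : ℕ} (hn : M i j = 0 ∨ n ≤ M i j) :
    0 ≤ (U ℝ (n - 1)).eval (-B (Δ i) (Δ j)) := by
  by_cases hM : M i j = 0
  · exact (chebyshev_U_nonneg_of_one_le (by linarith [h.apply_le_neg_one i j hM]) n).1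
  · have hM1 : M i j ≠ 1 := M.off_diagonal i j hij
    rw [h.apply_eq_neg_cos i j hM, neg_neg]
    exact chebyshev_U_cos_pi_div_nonneg (by lia) (hn.resolve_left hM)

lemma isLiftable_unitReflection : M.IsLiftable fun i ↦ unitReflection (h.apply_self i) := by
  intro i j
  rcases eq_or_ne i j with rfl | hij
  · simp [unitReflection_mul_self]
  · have hM1 : M j i ≠ 1 := M.off_diagonal j i hij.symm
    rw [M.symmetric i j]
    by_cases hM : M j i = 0
    · simp [hM]
    · exact unitReflection_mul_pow_eq_one h.isSymm h.apply_self (by lia)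
        (h.apply_eq_neg_cos j i hM)

variable {W : Type*} [Group W] (cs : CoxeterSystem M W)

/-- The geometric representation, through which the Coxeter group acts on `E`, each simple
generator acting as the `B`-reflection in the corresponding vector of `Δ`. -/
def rep : W →* E ≃ₗ[ℝ] E :=
  cs.lift ⟨_, h.isLiftable_unitReflection⟩

lemma rep_simple (i : I) : h.rep cs (cs.simple i) = unitReflection (h.apply_self i) :=
  cs.lift_apply_simple h.isLiftable_unitReflection i

lemma rep_wordProd (ω : List I) : h.rep cs (cs.wordProd ω) =
    (ω.map fun i ↦ unitReflection (h.apply_self i)).prod := by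
  rw [CoxeterSystem.wordProd, map_list_prod, List.map_map]
  exact congrArg List.prod (List.map_congr_left fun i _ ↦ h.rep_simple cs i)

lemma rep_mem_orthogonalGroup (w : W) : h.rep cs w ∈ orthogonalGroup B := by
  induction w using cs.simple_induction with
  | simple i => exact h.rep_simple cs i ▸ unitReflection_mem_orthogonalGroup h.isSymm _
  | one => exact map_one (h.rep cs) ▸ one_mem _
  | mul w v hw hv => exact map_mul (h.rep cs) w v ▸ mul_mem hw hv

lemma rep_wordProd_alternatingWord_apply_mem_hull {i j : I} (hij : i ≠ j) {n : ℕ}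
    (hn : M i j = 0 ∨ n + 1 ≤ M i j) {C : PointedCone ℝ E} {w : W}
    (hi : h.rep cs w (Δ i) ∈ C) (hj : h.rep cs w (Δ j) ∈ C) :
    h.rep cs (w * cs.wordProd (CoxeterSystem.alternatingWord i j n)) (Δ i) ∈ C := by
  rw [map_mul, LinearEquiv.mul_apply, h.rep_wordProd,
    prod_map_unitReflection_alternatingWord_apply h.isSymm h.apply_self, map_add, map_smul,
    map_smul]
  have hUn := h.chebyshev_U_nonneg hij hn
  have hUn1 := h.chebyshev_U_nonneg hij (n := n) (hn.imp_right (by lia))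
  rw [show ((n + 1 : ℕ) - 1 : ℤ) = n by push_cast; ring] at hUn
  refine add_mem (C.smul_mem hUn ?_) (C.smul_mem hUn1 ?_) <;> split_ifs <;> assumption

/-- The positive root criterion. If a reduced expression of `w` ends in the letter `j ≠ i`,
strip off its maximal alternating suffix in `i` and `j`: the rank two computation writes
`rep w (Δ i)` as a nonnegative combination of `rep v (Δ i)` and `rep v (Δ j)` with `v` shorter. -/
theorem rep_apply_mem_hull_of_not_isRightDescent {w : W} {i : I} (hi : ¬cs.IsRightDescent w i) :
    h.rep cs w (Δ i) ∈ PointedCone.hull ℝ (Set.range Δ) := by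
  induction hl : cs.length w using Nat.strong_induction_on generalizing w i with
  | h l ih =>
    rcases eq_or_ne w 1 with rfl | hw
    · simpa using PointedCone.subset_hull (Set.mem_range_self i)
    · obtain ⟨j, hj⟩ := cs.exists_rightDescent_of_ne_one hw
      have hij : i ≠ j := fun hij ↦ hi (hij ▸ hj)
      obtain ⟨v, n, hn, rfl, hlen, hvi, hvj⟩ := exists_eq_mul_wordProd_alternatingWord cs i hj
      have hbound := le_of_isReduced_alternatingWord cs (isReduced_alternatingWord_succ cs hlen hi)
      rw [M.symmetric j i] at hbound
      exact h.rep_wordProd_alternatingWord_apply_mem_hull cs hij hbound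
        (ih _ (by lia) hvi rfl) (ih _ (by lia) hvj rfl)

theorem eq_one_of_forall_rep_apply_pos {f : Module.Dual ℝ E} (hf : ∀ i, 0 ≤ f (Δ i)) {w : W}
    (hw : ∀ i, 0 < f (h.rep cs w (Δ i))) : w = 1 := by
  by_contra hne
  obtain ⟨i, hi⟩ := cs.exists_rightDescent_of_ne_one hne
  have hmem := h.rep_apply_mem_hull_of_not_isRightDescent cs
    (cs.isRightDescent_iff_not_isRightDescent_mul.1 hi)
  rw [map_mul, LinearEquiv.mul_apply, h.rep_simple, unitReflection_apply_self, map_neg] at hmem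
  have hnonneg : PointedCone.hull ℝ (Set.range Δ) ≤ (PointedCone.positive ℝ ℝ).comap f :=
    Submodule.span_le.2 (Set.range_subset_iff.2 hf)
  have : 0 ≤ f (-h.rep cs w (Δ i)) := hnonneg hmem
  rw [map_neg] at this
  linarith [hw i]

/-! ### Discreteness of the root system -/

/-- The root system of a geometric realization: the orbit of `Δ` under the Coxeter group. -/
def roots : Set E := {ρ | ∃ (w : W) (i : I), h.rep cs w (Δ i) = ρ}

variable {h cs}

lemma apply_self_of_mem_roots {ρ : E} (hρ : ρ ∈ h.roots cs) : B ρ ρ = 1 := by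
  obtain ⟨w, i, rfl⟩ := hρ
  rw [h.rep_mem_orthogonalGroup cs w, h.apply_self]

lemma exists_rep_eq_unitReflection {ρ : E} (hρ : ρ ∈ h.roots cs) :
    ∃ w, h.rep cs w = unitReflection (apply_self_of_mem_roots hρ) := by
  obtain ⟨w, i, hwi⟩ := hρ
  refine ⟨w * cs.simple i * w⁻¹, ?_⟩
  rw [map_mul, map_mul, map_inv, h.rep_simple, mul_inv_eq_iff_eq_mul]
  exact mul_unitReflection (h.rep_mem_orthogonalGroup cs w) _ _ hwi

section Topology

variable [TopologicalSpace E] [IsTopologicalAddGroup E] [ContinuousSMul ℝ E] [T2Space E]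
  [FiniteDimensional ℝ E] [Finite I] {f : Module.Dual ℝ E}

/-- The reflections in two roots close to `x` compose to an element of the Coxeter group close to
the identity, which keeps every `Δ i` in the half-space `0 < f` and is therefore trivial. -/
lemma eventually_eq_of_mem_roots (hf : ∀ i, 0 < f (Δ i)) {x : E} (hx : B x x = 1) :
    ∀ᶠ p in 𝓝 (x, x), p.1 ∈ h.roots cs → p.2 ∈ h.roots cs → p.1 = p.2 := by
  have hpos := eventually_all.2 fun i ↦ eventually_pos_unitReflection_unitReflection hx (hf i)
  have hne : ∀ᶠ p : E × E in 𝓝 (x, x), p.1 ≠ -p.2 := by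
    refine (isOpen_ne_fun continuous_fst continuous_snd.neg).mem_nhds fun (hneg : x = -x) ↦ ?_
    have hBx : B x x = B x (-x) := congrArg (B x) hneg
    rw [map_neg, hx] at hBx
    linarith
  filter_upwards [hpos, hne] with ⟨v, w⟩ hpos hne hv hw
  obtain ⟨a, ha⟩ := exists_rep_eq_unitReflection hv
  obtain ⟨b, hb⟩ := exists_rep_eq_unitReflection hw
  have hab : a * b = 1 := h.eq_one_of_forall_rep_apply_pos cs (fun i ↦ (hf i).le) fun i ↦ by
    rw [map_mul, LinearEquiv.mul_apply, ha, hb]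
    exact hpos i _ _
  have hcomp : unitReflection (apply_self_of_mem_roots hv) =
      unitReflection (apply_self_of_mem_roots hw) := by
    rw [← ha, ← mul_left_inj (h.rep cs b), ← map_mul, hab, map_one, hb, unitReflection_mul_self]
  exact (eq_or_eq_neg_of_unitReflection_eq hcomp).resolve_right hne

theorem not_accPt_roots (hf : ∀ i, 0 < f (Δ i)) (x : E) : ¬AccPt x (𝓟 (h.roots cs)) := by
  intro hacc
  have hx : B x x = 1 :=
    closure_minimal (fun ρ hρ ↦ apply_self_of_mem_roots hρ)
      (isClosed_eq (continuous_bilinForm_self B) continuous_const)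
      (mem_closure_iff_clusterPt.2 hacc.clusterPt)
  rw [accPt_iff_frequently_nhdsNE] at hacc
  obtain ⟨v, hv, hvx, hvw⟩ :
      ∃ v ∈ h.roots cs, v ≠ x ∧ ∀ᶠ w in 𝓝 x, v ∈ h.roots cs → w ∈ h.roots cs → v = w := by
    have hev := (eventually_eq_of_mem_roots (cs := cs) (h := h) hf hx).curry_nhds
    obtain ⟨v, hv, hvx, hvw⟩ := (hacc.and_eventually
      (eventually_mem_nhdsWithin.and (hev.filter_mono nhdsWithin_le_nhds))).exists
    exact ⟨v, hv, hvx, hvw⟩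
  obtain ⟨w, hw, hwv, hvw⟩ := (hacc.and_eventually (nhdsWithin_le_nhds
    ((eventually_ne_nhds hvx.symm).and hvw))).exists
  exact hwv (hvw hv hw).symm

theorem finite_roots_inter (hf : ∀ i, 0 < f (Δ i)) {K : Set E} (hK : IsCompact K) :
    (h.roots cs ∩ K).Finite := by
  by_contra hinf
  obtain ⟨x, -, hx⟩ :=
    Set.Infinite.exists_accPt_of_subset_isCompact hinf hK Set.inter_subset_right
  exact not_accPt_roots hf x (hx.mono (Filter.principal_mono.2 Set.inter_subset_left))

end Topology

end IsGeometricRealization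

/-! ### Cluster points of normalized roots -/

lemma mapClusterPt_cofinite_of_accPt_image {X Y : Type*} [TopologicalSpace Y] [T1Space Y]
    {f : X → Y} {s : Set X} {y : Y} (hy : AccPt y (𝓟 (f '' s))) :
    MapClusterPt y cofinite fun x : s ↦ f x := by
  simp_rw [mapClusterPt_iff_frequently, frequently_cofinite_iff_infinite]
  intro t ht
  refine (Set.Infinite.of_accPt (hy.nhds_inter ht)).mono ?_ |>.of_image fun x : s ↦ f x
  rintro _ ⟨hxt, x, hx, rfl⟩
  exact ⟨⟨x, hx⟩, hxt, rfl⟩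

lemma eq_of_mapClusterPt_of_tendsto {X Y Z : Type*} [TopologicalSpace Y] [TopologicalSpace Z]
    [T2Space Z] {F : Filter X} {f : X → Y} {g : Y → Z} {y : Y} {z : Z} (hy : MapClusterPt y F f)
    (hg : ContinuousAt g y) (hz : Tendsto (g ∘ f) F (𝓝 z)) : g y = z :=
  eq_of_nhds_neBot ((hy.continuousAt_comp hg).clusterPt.mono hz)

section NormalizedRoots

lemma l1_eq_sumCoords (Δ : Module.Basis ι ℝ V) (v : V) : l1 Δ v = Δ.sumCoords v := by
  rw [Δ.coe_sumCoords_of_fintype]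
  simp [l1]

variable {B : LinearMap.BilinForm ℝ V} {Δ : Module.Basis ι ℝ V}

lemma continuous_l1 (Δ : Module.Basis ι ℝ V) : Continuous (l1 Δ) := by
  have : FiniteDimensional ℝ V := Δ.finiteDimensional_of_finite
  simpa only [funext (l1_eq_sumCoords Δ)] using Δ.sumCoords.continuous_of_finiteDimensional

lemma l1_nrm {v : V} (hv : l1 Δ v ≠ 0) : l1 Δ (nrm Δ v) = 1 := by
  rw [nrm, l1_eq_sumCoords, map_smul, ← l1_eq_sumCoords, smul_eq_mul, inv_mul_cancel₀ hv]

lemma apply_nrm_nrm (B : LinearMap.BilinForm ℝ V) (Δ : Module.Basis ι ℝ V) (v : V) :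
    B (nrm Δ v) (nrm Δ v) = (l1 Δ v)⁻¹ ^ 2 * B v v := by
  simp [nrm, sq, mul_assoc]

namespace IsGeometricRealization

section Phi

variable {I E : Type*} [NormedAddCommGroup E] [NormedSpace ℝ E] {M : CoxeterMatrix I}
  {B : LinearMap.BilinForm ℝ E} {Δ : Module.Basis I ℝ E} (h : IsGeometricRealization M B Δ)

include h

lemma cox_le_range_rep : cox B Δ ≤ (h.rep M.toCoxeterSystem).range := by
  refine (Subgroup.closure_le _).2 fun e ⟨i, he⟩ ↦ ⟨M.toCoxeterSystem.simple i, ?_⟩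
  ext u
  rw [h.rep_simple, unitReflection_apply, he, h.apply_self, div_one]

lemma Phi_subset_roots : Phi B Δ ⊆ h.roots M.toCoxeterSystem := by
  rintro ρ ⟨g, hg, i, rfl⟩
  obtain ⟨w, rfl⟩ := h.cox_le_range_rep hg
  exact ⟨w, i, rfl⟩

lemma apply_self_of_mem_posPhi {ρ : E} (hρ : ρ ∈ posPhi B Δ) : B ρ ρ = 1 :=
  apply_self_of_mem_roots (h.Phi_subset_roots hρ.1)

end Phi

variable {M : CoxeterMatrix ι} (h : IsGeometricRealization M B Δ)

include h

theorem finite_setOf_l1_le (c : ℝ) : {ρ ∈ posPhi B Δ | l1 Δ ρ ≤ c}.Finite := by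
  have : FiniteDimensional ℝ V := Δ.finiteDimensional_of_finite
  let K : Set V := Δ.equivFunL.symm '' Set.Icc 0 (fun _ ↦ c)
  have hK : IsCompact K := isCompact_Icc.image Δ.equivFunL.symm.continuous
  have hpos (i : ι) : 0 < Δ.sumCoords (Δ i) := by simp
  refine (finite_roots_inter (h := h) (cs := M.toCoxeterSystem) hpos hK).subset ?_
  rintro ρ ⟨⟨hρ, hnonneg⟩, hle⟩
  refine ⟨h.Phi_subset_roots hρ, Δ.equivFunL ρ, ⟨hnonneg, fun i ↦ ?_⟩,
    Δ.equivFunL.symm_apply_apply ρ⟩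
  exact (Finset.single_le_sum (fun j _ ↦ hnonneg j) (Finset.mem_univ i)).trans hle

theorem tendsto_l1_cofinite : Tendsto (fun ρ : posPhi B Δ ↦ l1 Δ ρ) cofinite atTop := by
  refine tendsto_atTop.2 fun c ↦ ?_
  rw [eventually_cofinite]
  refine ((h.finite_setOf_l1_le c).preimage Subtype.val_injective.injOn).subset ?_
  intro ρ hρ
  exact ⟨ρ.2, (not_le.1 hρ).le⟩

lemma eventually_l1_nrm_eq_one : ∀ᶠ ρ : posPhi B Δ in cofinite, l1 Δ (nrm Δ ρ) = 1 :=
  (h.tendsto_l1_cofinite.eventually_ne_atTop 0).mono fun _ ↦ l1_nrm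

lemma tendsto_apply_nrm_nrm :
    Tendsto (fun ρ : posPhi B Δ ↦ B (nrm Δ ρ) (nrm Δ ρ)) cofinite (𝓝 0) := by
  have hsq : Tendsto (fun ρ : posPhi B Δ ↦ (l1 Δ ρ)⁻¹ ^ 2) cofinite (𝓝 0) := by
    simpa using h.tendsto_l1_cofinite.inv_tendsto_atTop.pow 2
  refine hsq.congr fun ρ ↦ ?_
  rw [apply_nrm_nrm, h.apply_self_of_mem_posPhi ρ.2, mul_one]

theorem isotropic_of_mapClusterPt {ℓ : V}
    (hℓ : MapClusterPt ℓ cofinite fun ρ : posPhi B Δ ↦ nrm Δ ρ) : B ℓ ℓ = 0 ∧ l1 Δ ℓ = 1 := by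
  have : FiniteDimensional ℝ V := Δ.finiteDimensional_of_finite
  exact ⟨eq_of_mapClusterPt_of_tendsto (g := fun v ↦ B v v) hℓ
      (continuous_bilinForm_self B).continuousAt h.tendsto_apply_nrm_nrm,
    eq_of_mapClusterPt_of_tendsto hℓ (continuous_l1 Δ).continuousAt
      (tendsto_nhds_of_eventually_eq h.eventually_l1_nrm_eq_one)⟩

end IsGeometricRealization

end NormalizedRoots

/-- Every accumulation point of the set of normalized roots lies in `Q ∩ V₁`, i.e.
`E(Φ) ⊆ Q̂`.  In particular, if `(ρ n)` is an injective sequence of positive roots whose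
normalizations converge to `ℓ`, then `B ℓ ℓ = 0` and `ℓ ∈ V₁`. -/
theorem statement1 (B : LinearMap.BilinForm ℝ V) (Δ : Module.Basis ι ℝ V)
    (hsymm : ∀ u v : V, B u v = B v u)
    (hdiag : ∀ i : ι, B (Δ i) (Δ i) = 1)
    (hoff : ∀ i j : ι, i ≠ j → B (Δ i) (Δ j) ≤ -1 ∨
      ∃ k : ℕ, 2 ≤ k ∧ B (Δ i) (Δ j) = -Real.cos (Real.pi / (k : ℝ))) :
    Eset B Δ ⊆ isoQ B ∩ { v : V | l1 Δ v = 1 } ∧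
    ∀ ρ : ℕ → V, (∀ n : ℕ, ρ n ∈ posPhi B Δ) → Function.Injective ρ →
      ∀ ℓ : V, Tendsto (fun n : ℕ => nrm Δ (ρ n)) atTop (𝓝 ℓ) →
        B ℓ ℓ = 0 ∧ l1 Δ ℓ = 1 := by
  obtain ⟨M, h⟩ := exists_isGeometricRealization ⟨hsymm⟩ hdiag hoff
  refine ⟨fun ℓ hℓ ↦ h.isotropic_of_mapClusterPt (mapClusterPt_cofinite_of_accPt_image hℓ),
    fun ρ hρ hinj ℓ hℓ ↦ h.isotropic_of_mapClusterPt ?_⟩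
  have hcofinite : Tendsto (fun n ↦ (⟨ρ n, hρ n⟩ : posPhi B Δ)) atTop cofinite := by
    rw [← Nat.cofinite_eq_atTop]
    exact Function.Injective.tendsto_cofinite fun m n hmn ↦ hinj (congrArg Subtype.val hmn)
  exact .of_comp hcofinite hℓ.mapClusterPt
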